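/- arXiv:0711.1188 — 4 statements merged into one kernel-verified Lean document; each statement's English description precedes it below -/
import Mathlib

section
/- Let Σ' be the semiring of subsets of S_ℕ generated by the cylinder sets B_{i,j} = {π ∈ S_ℕ : π(i) = j} (i.e. the collection of finite intersections of cylinder sets and their complements), and let Σ be the σ-algebra generated by the cylinder sets. Let μ be a finitely additive set function on Σ' with μ(S_ℕ) = 1, and assume that for every i ∈ ℕ and every ε > 0 there exists a finite set A ⊆ ℕ (depending on i and ε) such that ∑_{j∈A} μ(B_{i,j}) > 1 − ε and ∑_{j∈A} μ(B_{j,i}) > 1 − ε. Then μ extends uniquely to a countably additive probability measure on (S_ℕ, Σ). -/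
/-!
The set function is an additive content on the semiring of cylinder intersections, so by
Carathéodory's theorem existence reduces to σ-subadditivity on the semiring (`sigma_subadd`), and
uniqueness is the π-λ theorem.

For σ-subadditivity, `Equiv.Perm ℕ` is not compact, but it embeds in the compact space of
0-1 matrices `ℕ × ℕ → Bool`, where every member of the semiring is the trace of a clopen set.
A matrix with at most one `1` in each row and column is a permutation matrix as soon as row `i` and
column `i` each have a `1` at an index of a finite set `A i`, for every `i`. Hence a countable cover
of a member of the semiring becomes, after adding the sets `rowOut i (A i)` and `colOut i (A i)` on
which this fails, a cover of a compact set of matrices, and finitely many of these sets suffice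
(`finite_cover`). The tightness hypothesis makes the total mass of the added sets arbitrarily small,
and finite subadditivity concludes.
-/

open MeasureTheory

/-- The cylinder set `B_{i,j} = {π : π i = j}` in the group of permutations of `ℕ`. -/
def cyl (i j : ℕ) : Set (Equiv.Perm ℕ) := {π : Equiv.Perm ℕ | π i = j}

/-- The semiring of sets generated by the cylinder sets: finite intersections of
cylinder sets and their complements. -/
def permSemiring : Set (Set (Equiv.Perm ℕ)) :=
  {S | ∃ T : Finset ((ℕ × ℕ) × Bool),
    S = ⋂ t ∈ T, (if t.2 then cyl t.1.1 t.1.2 else (cyl t.1.1 t.1.2)ᶜ)}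

/-- The σ-algebra on permutations of `ℕ` generated by the cylinder sets. -/
def permSigmaAlgebra : MeasurableSpace (Equiv.Perm ℕ) :=
  MeasurableSpace.generateFrom {S | ∃ i j : ℕ, S = cyl i j}

/-- The member of the semiring described by a finite set of constraints: `((i, j), true)` demands
`π i = j` and `((i, j), false)` demands `π i ≠ j`. -/
def permSat (T : Finset ((ℕ × ℕ) × Bool)) : Set (Equiv.Perm ℕ) :=
  {π | ∀ t ∈ T, decide (π t.1.1 = t.1.2) = t.2}

theorem mem_permSemiring_iff {S : Set (Equiv.Perm ℕ)} :
    S ∈ permSemiring ↔ ∃ T, S = permSat T := by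
  have h : ∀ T : Finset ((ℕ × ℕ) × Bool),
      (⋂ t ∈ T, (if t.2 then cyl t.1.1 t.1.2 else (cyl t.1.1 t.1.2)ᶜ)) = permSat T := by
    intro T
    ext π
    simp only [Set.mem_iInter, permSat, Set.mem_ofPred_eq]
    refine forall₂_congr fun t _ => ?_
    rcases t with ⟨⟨i, j⟩, b⟩
    cases b <;> simp [cyl]
  simp only [permSemiring, Set.mem_ofPred_eq, h]

theorem permSat_mem (T : Finset ((ℕ × ℕ) × Bool)) : permSat T ∈ permSemiring :=
  mem_permSemiring_iff.2 ⟨T, rfl⟩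

theorem permSat_union (T T' : Finset ((ℕ × ℕ) × Bool)) :
    permSat (T ∪ T') = permSat T ∩ permSat T' := by
  ext π
  simp only [permSat, Finset.mem_union, Set.mem_ofPred_eq, Set.mem_inter_iff]
  grind

theorem univ_mem_permSemiring : Set.univ ∈ permSemiring :=
  mem_permSemiring_iff.2 ⟨∅, by simp [permSat]⟩

theorem cyl_mem_permSemiring (i j : ℕ) : cyl i j ∈ permSemiring :=
  mem_permSemiring_iff.2 ⟨{((i, j), true)}, by simp [permSat, cyl]⟩

/-- The difference of two members is decomposed by removing the constraints of the second one at a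
time: `s \ (C ∩ D) = (s ∩ Cᶜ) ⊔ ((s ∩ C) \ D)`. -/
theorem permSat_sdiff (T' : Finset ((ℕ × ℕ) × Bool)) : ∀ T : Finset ((ℕ × ℕ) × Bool),
    ∃ I : Finset (Set (Equiv.Perm ℕ)), ↑I ⊆ permSemiring ∧
      Set.PairwiseDisjoint (I : Set (Set (Equiv.Perm ℕ))) id ∧
      permSat T \ permSat T' = ⋃₀ I := by
  classical
  induction T' using Finset.induction with
  | empty => exact fun T => ⟨∅, by simp, by simp, by simp [permSat]⟩
  | insert c D _ ih =>
    intro T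
    obtain ⟨I, hI, hd, hu⟩ := ih (T ∪ {c})
    have hsub : ∀ s ∈ I, s ⊆ permSat (T ∪ {c}) := fun s hs =>
      (Set.subset_sUnion_of_mem (Finset.mem_coe.2 hs)).trans (hu ▸ Set.sdiff_subset)
    refine ⟨insert (permSat (T ∪ {(c.1, !c.2)})) I, ?_, ?_, ?_⟩
    · rw [Finset.coe_insert]
      exact Set.insert_subset (permSat_mem _) hI
    · rw [Finset.coe_insert]
      refine hd.insert fun s hs _ => ?_
      refine Set.disjoint_left.2 fun π h1 h2 => ?_
      have h3 := hsub s hs h2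
      have a := h1 (c.1, !c.2) (by simp)
      have b := h3 c (by simp)
      simp only at a
      rw [b] at a
      cases h : c.2 <;> simp [h] at a
    · rw [Finset.coe_insert, Set.sUnion_insert, ← hu]
      ext π
      have e : permSat (insert c D) = permSat {c} ∩ permSat D := by
        rw [← permSat_union, Finset.insert_eq]
      have n : π ∈ permSat {(c.1, !c.2)} ↔ π ∉ permSat {c} := by
        rcases c with ⟨⟨i, j⟩, b⟩
        cases b <;> simp [permSat]
      simp only [e, permSat_union, Set.mem_union, Set.mem_sdiff, Set.mem_inter_iff, n]
      tauto

theorem isSetSemiring_permSemiring : IsSetSemiring permSemiring where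
  empty_mem := mem_permSemiring_iff.2 ⟨{((0, 0), true), ((0, 0), false)}, by
    ext π
    simp [permSat]⟩
  inter_mem := by
    intro s hs t ht
    obtain ⟨T, rfl⟩ := mem_permSemiring_iff.1 hs
    obtain ⟨T', rfl⟩ := mem_permSemiring_iff.1 ht
    exact permSat_union T T' ▸ permSat_mem _
  sdiff_eq_sUnion' := by
    intro s hs t ht
    obtain ⟨T, rfl⟩ := mem_permSemiring_iff.1 hs
    obtain ⟨T', rfl⟩ := mem_permSemiring_iff.1 ht
    exact permSat_sdiff T' T

theorem permSigmaAlgebra_eq : permSigmaAlgebra = MeasurableSpace.generateFrom permSemiring := by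
  refine le_antisymm ?_ ?_
  · refine MeasurableSpace.generateFrom_mono ?_
    rintro _ ⟨i, j, rfl⟩
    exact cyl_mem_permSemiring i j
  · refine MeasurableSpace.generateFrom_le ?_
    rintro _ ⟨T, rfl⟩
    refine Finset.measurableSet_biInter T fun t _ => ?_
    have h : MeasurableSet[permSigmaAlgebra] (cyl t.1.1 t.1.2) :=
      MeasurableSpace.measurableSet_generateFrom ⟨_, _, rfl⟩
    split_ifs
    exacts [h, h.compl]

/-- The permutations sending `i` outside of `A`. -/
def rowOut (i : ℕ) (A : Finset ℕ) : Set (Equiv.Perm ℕ) := {π | ∀ j ∈ A, π i ≠ j}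

/-- The permutations for which the preimage of `i` lies outside of `A`. -/
def colOut (i : ℕ) (A : Finset ℕ) : Set (Equiv.Perm ℕ) := {π | ∀ j ∈ A, π j ≠ i}

theorem rowOut_mem (i : ℕ) (A : Finset ℕ) : rowOut i A ∈ permSemiring :=
  mem_permSemiring_iff.2 ⟨A.image fun j => ((i, j), false), by ext π; simp [permSat, rowOut]⟩

theorem colOut_mem (i : ℕ) (A : Finset ℕ) : colOut i A ∈ permSemiring :=
  mem_permSemiring_iff.2 ⟨A.image fun j => ((j, i), false), by ext π; simp [permSat, colOut]⟩

/-- A countable cover of a member of the semiring, enlarged by the sets `rowOut i (A i)` and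
`colOut i (A i)`, has a finite subcover, by compactness of the space of 0-1 matrices. -/
theorem finite_cover (T : Finset ((ℕ × ℕ) × Bool)) (F : ℕ → Finset ((ℕ × ℕ) × Bool))
    (A : ℕ → Finset ℕ) (hcov : permSat T ⊆ ⋃ i, permSat (F i)) :
    ∃ I : Finset ℕ, permSat T ⊆
      ⋃ i ∈ I, (permSat (F i) ∪ rowOut i (A i) ∪ colOut i (A i)) := by
  let mSat : Finset ((ℕ × ℕ) × Bool) → Set (ℕ × ℕ → Bool) := fun T => {m | ∀ t ∈ T, m t.1 = t.2}
  have clopen : ∀ T, IsClopen (mSat T) := by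
    intro T
    have : mSat T = ⋂ t ∈ T, (fun m : ℕ × ℕ → Bool => m t.1) ⁻¹' {t.2} := by
      ext m; simp [mSat]
    rw [this]
    exact isClopen_biInter_finset fun t _ =>
      (isClopen_discrete {t.2}).preimage (continuous_apply t.1)
  -- Matrices with at most one `1` in each row and in each column.
  let X : Set (ℕ × ℕ → Bool) :=
    (⋂ i, ⋂ j, ⋂ k, ⋂ (_ : j ≠ k), (mSat {((i, j), true), ((i, k), true)})ᶜ) ∩
    (⋂ i, ⋂ j, ⋂ k, ⋂ (_ : j ≠ k), (mSat {((j, i), true), ((k, i), true)})ᶜ)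
  have hX : IsClosed X := by
    refine IsClosed.inter ?_ ?_ <;>
    exact isClosed_iInter fun i => isClosed_iInter fun j => isClosed_iInter fun k =>
      isClosed_iInter fun _ => (clopen _).compl.isClosed
  have mX : ∀ m, m ∈ X ↔
      (∀ i j k, m (i, j) = true → m (i, k) = true → j = k) ∧
      (∀ i j k, m (j, i) = true → m (k, i) = true → j = k) := by
    intro m
    simp only [X, mSat, Set.mem_inter_iff, Set.mem_iInter, Set.mem_compl_iff, Set.mem_ofPred_eq,
      Finset.mem_insert, Finset.mem_singleton, forall_eq_or_imp, forall_eq]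
    grind
  let O : ℕ → Set (ℕ × ℕ → Bool) := fun i =>
    mSat (F i) ∪ mSat ((A i).image fun j => ((i, j), false)) ∪
      mSat ((A i).image fun j => ((j, i), false))
  have hcomp : IsCompact (X ∩ mSat T) := (hX.inter (clopen T).isClosed).isCompact
  obtain ⟨I, hI⟩ := hcomp.elim_finite_subcover O
    (fun i => ((clopen _).isOpen.union (clopen _).isOpen).union (clopen _).isOpen) (by
      rintro m ⟨hm, hmT⟩
      obtain ⟨h1, h2⟩ := (mX m).1 hm
      by_contra hno
      simp only [O, Set.mem_iUnion, not_exists, Set.mem_union, not_or] at hno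
      have hr : ∀ i, ∃ j, m (i, j) = true := by
        intro i
        have := (hno i).1.2
        simp [mSat] at this
        grind
      have hc : ∀ i, ∃ j, m (j, i) = true := by
        intro i
        have := (hno i).2
        simp [mSat] at this
        grind
      choose f hf using hr
      choose g hg using hc
      let π : Equiv.Perm ℕ := ⟨f, g, fun i => h2 _ _ _ (hg (f i)) (hf i),
        fun i => h1 _ _ _ (hf (g i)) (hg i)⟩
      have hπ : ∀ p : ℕ × ℕ, decide (π p.1 = p.2) = m p := by
        rintro ⟨i, j⟩
        by_cases hij : m (i, j) = true
        · rw [hij, decide_eq_true_iff]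
          exact h1 _ _ _ (hf i) hij
        · have : π i ≠ j := fun h => hij (h ▸ hf i)
          simp [this, hij]
      have hsat : ∀ T, π ∈ permSat T ↔ m ∈ mSat T := by
        intro T
        simp only [permSat, mSat, Set.mem_ofPred_eq, hπ]
      obtain ⟨i, hi⟩ := Set.mem_iUnion.1 (hcov ((hsat T).2 hmT))
      exact (hno i).1.1 ((hsat _).1 hi))
  refine ⟨I, fun π hπ => ?_⟩
  have hm : (fun p : ℕ × ℕ => decide (π p.1 = p.2)) ∈ X ∩ mSat T := by
    refine ⟨(mX _).2 ⟨?_, ?_⟩, hπ⟩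
    · intro i j k hj hk
      simp only [decide_eq_true_eq] at hj hk
      exact hj.symm.trans hk
    · intro i j k hj hk
      simp only [decide_eq_true_eq] at hj hk
      exact π.injective (hj.trans hk.symm)
  obtain ⟨i, hiI, hi⟩ := Set.mem_iUnion₂.1 (hI hm)
  refine Set.mem_iUnion₂.2 ⟨i, hiI, ?_⟩
  rcases hi with (hi | hi) | hi
  · exact Or.inl (Or.inl hi)
  · refine Or.inl (Or.inr ?_)
    intro j hj
    have := hi ((i, j), false) (Finset.mem_image_of_mem _ hj)
    simpa using this
  · refine Or.inr ?_
    intro j hj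
    have := hi ((j, i), false) (Finset.mem_image_of_mem _ hj)
    simpa using this

/-- Finite subadditivity of a content, for an indexed cover. -/
theorem content_le_sum {ι : Type*} (m : AddContent ENNReal permSemiring) (J : Finset ι)
    (g : ι → Set (Equiv.Perm ℕ)) (hg : ∀ i ∈ J, g i ∈ permSemiring) {s : Set (Equiv.Perm ℕ)}
    (hs : s ∈ permSemiring) (hsub : s ⊆ ⋃ i ∈ J, g i) : m s ≤ ∑ i ∈ J, m (g i) := by
  classical
  refine (addContent_le_sum_of_subset_sUnion isSetSemiring_permSemiring (J := J.image g)
    ?_ hs (by simpa using hsub)).trans ?_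
  · intro u hu
    obtain ⟨i, hi, rfl⟩ := Finset.mem_image.1 (Finset.mem_coe.1 hu)
    exact hg i hi
  · exact Finset.sum_image_le_of_nonneg (fun _ _ => zero_le)

/-- If disjoint members of the semiring carry mass more than `1 - ε`, the complement of their
union has mass at most `ε`. -/
theorem content_compl_le (m : AddContent ENNReal permSemiring) (h1 : m Set.univ = 1)
    {ε : ENNReal} (A : Finset ℕ) (g : ℕ → Set (Equiv.Perm ℕ)) (hg : ∀ i, g i ∈ permSemiring)
    (hd : Pairwise (Function.onFun Disjoint g)) {R : Set (Equiv.Perm ℕ)} (hR : R ∈ permSemiring)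
    (hRg : R = (⋃ j ∈ A, g j)ᶜ) (hA : 1 - ε < ∑ j ∈ A, m (g j)) : m R ≤ ε := by
  classical
  let f : Option ℕ → Set (Equiv.Perm ℕ) := fun o => o.elim R g
  have hRd : ∀ j ∈ A, Disjoint R (g j) := fun j hj => by
    rw [hRg]
    exact disjoint_compl_left.mono_right (Set.subset_biUnion_of_mem (u := g) hj)
  have hU : (⋃ o ∈ Finset.insertNone A, f o) = Set.univ := by
    ext π
    by_cases h : ∃ j ∈ A, π ∈ g j <;> simp [f, Option.exists, hRg, h]; grind
  have key := addContent_biUnion (m := m) (a := Finset.insertNone A) (f := f)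
    (by rintro (_ | j) _ <;> simp [f, hR, hg])
    (by
      rintro (_ | j) hj (_ | k) hk hne
      · exact absurd rfl hne
      · exact hRd k (by simpa using hk)
      · exact (hRd j (by simpa using hj)).symm
      · exact hd (fun h => hne (by rw [h])))
    (hU ▸ univ_mem_permSemiring)
  rw [hU, h1, Finset.sum_insertNone] at key
  change 1 = m R + ∑ j ∈ A, m (g j) at key
  have hfin : ∑ j ∈ A, m (g j) ≠ ⊤ :=
    ne_top_of_le_ne_top ENNReal.one_ne_top (key ▸ le_add_self)
  have h2 : m R + ∑ j ∈ A, m (g j) ≤ ε + ∑ j ∈ A, m (g j) := by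
    rw [← key, add_comm]
    exact tsub_le_iff_right.1 hA.le
  exact (ENNReal.add_le_add_iff_right hfin).1 h2

theorem sigma_subadd (m : AddContent ENNReal permSemiring) (h1 : m Set.univ = 1)
    (hcrit : ∀ (i : ℕ) (ε : ENNReal), 0 < ε →
      ∃ A : Finset ℕ, 1 - ε < ∑ j ∈ A, m (cyl i j) ∧ 1 - ε < ∑ j ∈ A, m (cyl j i)) :
    m.IsSigmaSubadditive := by
  intro f hf hU
  refine ENNReal.le_of_forall_pos_le_add fun ε hε _ => ?_
  obtain ⟨δ, hδ, hδs⟩ := ENNReal.exists_pos_sum_of_countable' (ε := (ε : ENNReal) / 2)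
    (by simpa using hε.ne') ℕ
  choose A hA using fun i => hcrit i (δ i) (hδ i)
  choose F hF using fun i => mem_permSemiring_iff.1 (hf i)
  obtain ⟨T, hT⟩ := mem_permSemiring_iff.1 hU
  have hrow : ∀ i, m (rowOut i (A i)) ≤ δ i := fun i =>
    content_compl_le m h1 (A i) (fun j => cyl i j) (fun j => cyl_mem_permSemiring i j)
      (fun j k hjk => Set.disjoint_left.2 fun π hj hk => hjk (hj.symm.trans hk))
      (rowOut_mem _ _) (by ext π; simp [rowOut, cyl]) (hA i).1
  have hcol : ∀ i, m (colOut i (A i)) ≤ δ i := fun i =>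
    content_compl_le m h1 (A i) (fun j => cyl j i) (fun j => cyl_mem_permSemiring j i)
      (fun j k hjk => Set.disjoint_left.2 fun π hj hk => hjk (π.injective (hj.trans hk.symm)))
      (colOut_mem _ _) (by ext π; simp [colOut, cyl]) (hA i).2
  obtain ⟨I, hI⟩ := finite_cover T F A (by
    rw [← hT]
    exact Set.iUnion_mono fun i => (hF i).le)
  have hle := content_le_sum m (I ×ˢ (Finset.univ : Finset (Fin 3)))
    (fun p => ![f p.1, rowOut p.1 (A p.1), colOut p.1 (A p.1)] p.2)
    (by
      rintro ⟨i, k⟩ _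
      fin_cases k
      exacts [hf i, rowOut_mem _ _, colOut_mem _ _])
    hU (by
      rw [hT]
      intro π hπ
      obtain ⟨i, hi, h⟩ := Set.mem_iUnion₂.1 (hI hπ)
      rw [← hF i] at h
      rcases h with (h | h) | h
      · exact Set.mem_iUnion₂.2 ⟨(i, 0), by simp [hi], h⟩
      · exact Set.mem_iUnion₂.2 ⟨(i, 1), by simp [hi], h⟩
      · exact Set.mem_iUnion₂.2 ⟨(i, 2), by simp [hi], h⟩)
  rw [Finset.sum_product] at hle
  simp only [Fin.sum_univ_three] at hle
  calc m (⋃ i, f i)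
      ≤ ∑ i ∈ I, (m (f i) + m (rowOut i (A i)) + m (colOut i (A i))) := hle
    _ ≤ ∑ i ∈ I, (m (f i) + δ i + δ i) :=
        Finset.sum_le_sum fun i _ => add_le_add (add_le_add le_rfl (hrow i)) (hcol i)
    _ = ∑ i ∈ I, m (f i) + ∑ i ∈ I, δ i + ∑ i ∈ I, δ i := by
        rw [Finset.sum_add_distrib, Finset.sum_add_distrib]
    _ ≤ ∑' i, m (f i) + ε / 2 + ε / 2 :=
        add_le_add (add_le_add (ENNReal.sum_le_tsum I) ((ENNReal.sum_le_tsum I).trans hδs.le))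
          ((ENNReal.sum_le_tsum I).trans hδs.le)
    _ = ∑' i, m (f i) + ε := by rw [add_assoc, ENNReal.add_halves]

/-- A finitely additive probability set function on the semiring
generated by the cylinder sets, satisfying the tightness criterion
`∑_{j ∈ A} μ(B_{i,j}) > 1 - ε` and `∑_{j ∈ A} μ(B_{j,i}) > 1 - ε`, extends
uniquely to a (countably additive) measure on the generated σ-algebra. -/
theorem exists_unique_measure_extension
    (μ : Set (Equiv.Perm ℕ) → ENNReal)
    (hμuniv : μ Set.univ = 1)
    (hadd : ∀ (n : ℕ) (S : Fin n → Set (Equiv.Perm ℕ)),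
      (∀ i, S i ∈ permSemiring) → Pairwise (Function.onFun Disjoint S) →
      (⋃ i, S i) ∈ permSemiring → μ (⋃ i, S i) = ∑ i, μ (S i))
    (hcrit : ∀ (i : ℕ) (ε : ENNReal), 0 < ε →
      ∃ A : Finset ℕ, 1 - ε < ∑ j ∈ A, μ (cyl i j) ∧ 1 - ε < ∑ j ∈ A, μ (cyl j i)) :
    ∃! ν : @MeasureTheory.Measure (Equiv.Perm ℕ) permSigmaAlgebra,
      ∀ S ∈ permSemiring, ν S = μ S := by
  let m : AddContent ENNReal permSemiring :=
    { toFun := μ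
      empty' := by
        have h := hadd 0 (fun _ => ∅) (fun i => i.elim0) (fun i => i.elim0)
          (by simpa using isSetSemiring_permSemiring.empty_mem)
        simpa using h
      sUnion' := by
        intro I hI hd hU
        have e : (⋃₀ (I : Set (Set (Equiv.Perm ℕ)))) = ⋃ i, (I.equivFin.symm i).1 := by
          rw [Set.sUnion_eq_iUnion]
          exact (I.equivFin.symm.iSup_comp (g := fun s : I => s.1)).symm
        rw [e] at hU ⊢
        rw [hadd _ _ (fun i => hI (I.equivFin.symm i).2) ?_ hU]
        · rw [I.equivFin.symm.sum_comp (fun s : I => μ s.1), Finset.sum_coe_sort I μ]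
        · intro i j hij
          exact hd (I.equivFin.symm i).2 (I.equivFin.symm j).2
            (fun h => hij (I.equivFin.symm.injective (Subtype.ext h))) }
  have hm : m.IsSigmaSubadditive := sigma_subadd m hμuniv hcrit
  let _ : MeasurableSpace (Equiv.Perm ℕ) := permSigmaAlgebra
  refine ⟨m.measure isSetSemiring_permSemiring permSigmaAlgebra_eq.le hm,
    fun S hS => m.measure_eq isSetSemiring_permSemiring permSigmaAlgebra_eq hm hS, ?_⟩
  intro ν hν
  have h1 : ν Set.univ = 1 := (hν _ univ_mem_permSemiring).trans hμuniv
  have : IsFiniteMeasure ν := ⟨by rw [h1]; exact ENNReal.one_lt_top⟩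
  refine ext_of_generate_finite permSemiring permSigmaAlgebra_eq
    (fun s hs t ht _ => isSetSemiring_permSemiring.inter_mem s hs t ht) (fun S hS => ?_) ?_
  · rw [hν S hS]
    exact (m.measure_eq isSetSemiring_permSemiring permSigmaAlgebra_eq hm hS).symm
  · rw [h1, m.measure_eq isSetSemiring_permSemiring permSigmaAlgebra_eq hm univ_mem_permSemiring]
    exact hμuniv.symm
end

section
/- For every α ∈ [0,∞], set δ = (1 − e^{−α})/2 ∈ [0, 1/2]. Then for every n ≥ 0, h_n(α) = ∑_{j=0}^{⌊n/2⌋} (−δ)^j / j!. -/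
/-!
Write `N` for the number of 2-cycles and `x = e^{-α}`. Since `x ^ N = (1 + (x - 1)) ^ N`, the
binomial theorem reduces the claim to the binomial moments `∑_π C(N(π), j) = n! / (2 ^ j j!)` for
`2 j ≤ n` (`sum_choose_twoCycles`); those with `2 j > n` are zero because `N ≤ n / 2`.

The moments follow by induction on `j` from `(j + 1) C(N, j + 1) = N C(N - 1, j)` and a double
count (`sum_card_mul`): the pairs (permutation of an `n + 2`-element set, point lying in one of its
2-cycles) correspond to triples (point `i`, point `k ≠ i`, permutation `σ` of the remaining `n`
points), through `π = (i k) σ`, which has one 2-cycle more than `σ`.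
-/

open Finset

noncomputable section

/-- The number of cycles of length exactly 2 of a permutation of `{1,…,n}`. -/
def twoCycles {n : ℕ} (π : Equiv.Perm (Fin n)) : ℕ :=
  (Finset.univ.filter fun i : Fin n => Function.minimalPeriod (⇑π) i = 2).card / 2

/-- `e^{-α}` for `α ∈ [0,∞]`, with `e^{-∞} = 0`. -/
def expNegE (α : ENNReal) : ℝ := if α = ⊤ then 0 else Real.exp (-α.toReal)

/-- `h_n(α) = (1/n!) ∑_{π ∈ S_n} e^{-α N₂(π)}`. -/
def hcoef (α : ENNReal) (n : ℕ) : ℝ :=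
  (1 / (n.factorial : ℝ)) * ∑ π : Equiv.Perm (Fin n), expNegE α ^ twoCycles π

/-- The points lying in a 2-cycle of `π`. -/
def twoPoints {α : Type*} [Fintype α] [DecidableEq α] (π : Equiv.Perm α) : Finset α :=
  univ.filter fun i => π i ≠ i ∧ π (π i) = i

lemma mem_twoPoints {α : Type*} [Fintype α] [DecidableEq α] {π : Equiv.Perm α} {i : α} :
    i ∈ twoPoints π ↔ π i ≠ i ∧ π (π i) = i := by
  simp [twoPoints]

lemma minimalPeriod_eq_two_iff {α : Type*} (f : α → α) (i : α) :
    Function.minimalPeriod f i = 2 ↔ f i ≠ i ∧ f (f i) = i := by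
  rw [Function.minimalPeriod_eq_prime_iff]
  simp [Function.IsPeriodicPt, Function.IsFixedPt, and_comm]

/-- `π` restricts to a fixed-point-free involution of the points in its 2-cycles. -/
lemma even_card_twoPoints {α : Type*} [Fintype α] [DecidableEq α] (π : Equiv.Perm α) :
    Even (twoPoints π).card := by
  rw [← ZMod.natCast_eq_zero_iff_even]
  have h : ∑ _i ∈ twoPoints π, (1 : ZMod 2) = 0 := by
    refine Finset.sum_involution (fun i _ => π i) ?_ ?_ ?_ ?_
    · intro i _
      decide
    · intro i hi _
      exact (mem_twoPoints.1 hi).1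
    · intro i hi
      have := mem_twoPoints.1 hi
      rw [mem_twoPoints, this.2]
      exact ⟨this.1.symm, rfl⟩
    · intro i hi
      exact (mem_twoPoints.1 hi).2
  simpa using h

lemma two_mul_twoCycles {n : ℕ} (π : Equiv.Perm (Fin n)) :
    2 * twoCycles π = (twoPoints π).card := by
  have h : twoCycles π = (twoPoints π).card / 2 := by
    simp only [twoCycles, twoPoints, minimalPeriod_eq_two_iff]
  rw [h]
  exact Nat.two_mul_div_two_of_even (even_card_twoPoints π)

lemma card_twoPoints_permCongr {α β : Type*} [Fintype α] [DecidableEq α] [Fintype β]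
    [DecidableEq β] (e : α ≃ β) (π : Equiv.Perm α) :
    (twoPoints (e.permCongr π)).card = (twoPoints π).card := by
  have : twoPoints (e.permCongr π) = (twoPoints π).map e.toEmbedding := by
    ext b
    obtain ⟨a, rfl⟩ := e.surjective b
    simp [mem_twoPoints]
  rw [this, card_map]

lemma sum_twoPoints_eq_of_card {α : Type*} [Fintype α] [DecidableEq α] {n : ℕ}
    (h : Fintype.card α = n) (f : ℕ → ℝ) :
    ∑ π : Equiv.Perm α, f (twoPoints π).card =
      ∑ π : Equiv.Perm (Fin n), f (twoPoints π).card := by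
  refine Fintype.sum_equiv (Fintype.equivFinOfCardEq h).permCongr _ _ fun π => ?_
  rw [card_twoPoints_permCongr]

lemma card_twoPoints_swap_mul {α : Type*} [Fintype α] [DecidableEq α] {i k : α} (hik : i ≠ k)
    (σ : Equiv.Perm {x : α // x ≠ i ∧ x ≠ k}) :
    (twoPoints (Equiv.swap i k * Equiv.Perm.ofSubtype σ)).card = (twoPoints σ).card + 2 := by
  have hi : Equiv.Perm.ofSubtype σ i = i :=
    Equiv.Perm.ofSubtype_apply_of_not_mem σ (by simp)
  have hk : Equiv.Perm.ofSubtype σ k = k :=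
    Equiv.Perm.ofSubtype_apply_of_not_mem σ (by simp)
  have hx : ∀ x : {x : α // x ≠ i ∧ x ≠ k},
      (Equiv.swap i k * Equiv.Perm.ofSubtype σ) (x : α) = (σ x : α) := by
    intro x
    rw [Equiv.Perm.mul_apply, Equiv.Perm.ofSubtype_apply_coe,
      Equiv.swap_apply_of_ne_of_ne (σ x).2.1 (σ x).2.2]
  have key : twoPoints (Equiv.swap i k * Equiv.Perm.ofSubtype σ) =
      (twoPoints σ).map (Function.Embedding.subtype _) ∪ {i, k} := by
    ext a
    by_cases hai : a = i
    · subst hai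
      simp [mem_twoPoints, hi, hk, hik.symm]
    by_cases hak : a = k
    · subst hak
      simp [mem_twoPoints, hi, hk, hik]
    obtain ⟨b, rfl⟩ : ∃ b : {x : α // x ≠ i ∧ x ≠ k}, (b : α) = a := ⟨⟨a, hai, hak⟩, rfl⟩
    rw [mem_twoPoints, hx, hx]
    simp [mem_twoPoints, hai, hak, Subtype.ext_iff]
  rw [key, card_union_of_disjoint, card_map, card_pair hik]
  rw [disjoint_left]
  intro a ha
  simp only [mem_map, Function.Embedding.subtype_apply] at ha
  obtain ⟨b, -, rfl⟩ := ha
  simp [b.2.1, b.2.2]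

/-- The permutations exchanging `i` and `k` are the products `(i k) σ` with `σ` a permutation of the
other points. -/
lemma sum_filter_swapping {α : Type*} [Fintype α] [DecidableEq α] {i k : α} (hik : i ≠ k)
    (f : ℕ → ℝ) :
    ∑ π : Equiv.Perm α with π i = k ∧ π k = i, f (twoPoints π).card =
      ∑ σ : Equiv.Perm {x : α // x ≠ i ∧ x ≠ k}, f ((twoPoints σ).card + 2) := by
  symm
  refine Finset.sum_nbij (fun σ => Equiv.swap i k * Equiv.Perm.ofSubtype σ) ?_ ?_ ?_ ?_
  · intro σ _
    have hi : Equiv.Perm.ofSubtype σ i = i :=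
      Equiv.Perm.ofSubtype_apply_of_not_mem σ (by simp)
    have hk : Equiv.Perm.ofSubtype σ k = k :=
      Equiv.Perm.ofSubtype_apply_of_not_mem σ (by simp)
    simp [hi, hk]
  · intro σ _ τ _ h
    exact Equiv.Perm.ofSubtype_injective (mul_left_cancel h)
  · intro π hπ
    obtain ⟨h1, h2⟩ : π i = k ∧ π k = i := by simpa using hπ
    have hfi : (Equiv.swap i k * π) i = i := by simp [h1]
    have hfk : (Equiv.swap i k * π) k = k := by simp [h2]
    have hp : ∀ x, ((Equiv.swap i k * π) x ≠ i ∧ (Equiv.swap i k * π) x ≠ k) ↔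
        (x ≠ i ∧ x ≠ k) := by
      intro x
      have e1 : (Equiv.swap i k * π) x = i ↔ x = i :=
        ⟨fun h => (Equiv.swap i k * π).injective (h.trans hfi.symm), fun h => by rw [h, hfi]⟩
      have e2 : (Equiv.swap i k * π) x = k ↔ x = k :=
        ⟨fun h => (Equiv.swap i k * π).injective (h.trans hfk.symm), fun h => by rw [h, hfk]⟩
      rw [Ne, Ne, e1, e2]
    refine ⟨(Equiv.swap i k * π).subtypePerm (p := fun x => x ≠ i ∧ x ≠ k) hp, by simp, ?_⟩
    have hs : Equiv.Perm.ofSubtype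
        ((Equiv.swap i k * π).subtypePerm (p := fun x => x ≠ i ∧ x ≠ k) hp) =
        Equiv.swap i k * π := by
      refine Equiv.Perm.ofSubtype_subtypePerm hp fun x hx => ?_
      constructor
      · rintro rfl
        exact hx hfi
      · rintro rfl
        exact hx hfk
    simp only [hs, Equiv.swap_mul_self_mul]
  · intro σ _
    rw [card_twoPoints_swap_mul hik]

/-- Double count of the pairs (permutation, point in one of its 2-cycles), weighted by `f`. -/
lemma sum_card_mul (n : ℕ) (f : ℕ → ℝ) :
    ∑ π : Equiv.Perm (Fin (n + 2)), ((twoPoints π).card : ℝ) * f (twoPoints π).card =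
      (n + 2) * (n + 1) * ∑ σ : Equiv.Perm (Fin n), f ((twoPoints σ).card + 2) := by
  have h1 : ∀ π : Equiv.Perm (Fin (n + 2)), ((twoPoints π).card : ℝ) * f (twoPoints π).card =
      ∑ i, ∑ k ∈ univ.erase i, if π i = k ∧ π k = i then f (twoPoints π).card else 0 := by
    intro π
    rw [← nsmul_eq_mul, ← sum_const, twoPoints, sum_filter]
    refine sum_congr rfl fun i _ => ?_
    rw [← twoPoints]
    -- the only possible `k` is `π i`
    by_cases hi : π i = i
    · rw [if_neg (by simp [hi])]
      refine (sum_eq_zero fun k hk => if_neg ?_).symm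
      rintro ⟨h, -⟩
      exact (mem_erase.1 hk).1 (h.symm.trans hi)
    · rw [sum_eq_single_of_mem (π i) (by simp [hi])]
      · simp [hi]
      · intro k _ hk
        exact if_neg fun h => hk h.1.symm
  have h2 : ∀ i : Fin (n + 2), ∀ k ∈ univ.erase i,
      (∑ π : Equiv.Perm (Fin (n + 2)),
        if π i = k ∧ π k = i then f (twoPoints π).card else 0) =
      ∑ σ : Equiv.Perm (Fin n), f ((twoPoints σ).card + 2) := by
    intro i k hk
    have hik : i ≠ k := (mem_erase.1 hk).1.symm
    rw [← sum_filter, sum_filter_swapping hik]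
    refine sum_twoPoints_eq_of_card ?_ fun m => f (m + 2)
    have : (univ.filter fun x : Fin (n + 2) => x ≠ i ∧ x ≠ k) = (univ.erase k).erase i := by
      ext x
      simp
    rw [Fintype.card_subtype, this, card_erase_of_mem (by simp [hik]), card_erase_of_mem (by simp)]
    simp
  simp_rw [h1]
  rw [sum_comm]
  have h3 : ∀ i : Fin (n + 2), (∑ π : Equiv.Perm (Fin (n + 2)), ∑ k ∈ univ.erase i,
      if π i = k ∧ π k = i then f (twoPoints π).card else 0) =
      (n + 1) * ∑ σ : Equiv.Perm (Fin n), f ((twoPoints σ).card + 2) := by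
    intro i
    rw [sum_comm, sum_congr rfl (h2 i), sum_const, card_erase_of_mem (mem_univ i)]
    simp
  rw [sum_congr rfl fun i _ => h3 i, sum_const]
  simp
  ring

lemma twoCycles_le {n : ℕ} (π : Equiv.Perm (Fin n)) : twoCycles π ≤ n / 2 := by
  have h := card_le_univ (twoPoints π)
  rw [← two_mul_twoCycles, Fintype.card_fin] at h
  omega

/-- The double count `sum_card_mul` applied to the weight `C(N - 1, j)`, using
`N C(N - 1, j) = (j + 1) C(N, j + 1)`. -/
lemma sum_choose_twoCycles_succ (n j : ℕ) :
    2 * (j + 1) * ∑ π : Equiv.Perm (Fin (n + 2)), ((twoCycles π).choose (j + 1) : ℝ) =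
      (n + 2) * (n + 1) * ∑ σ : Equiv.Perm (Fin n), ((twoCycles σ).choose j : ℝ) := by
  have h := sum_card_mul n fun m => ((m / 2 - 1).choose j : ℝ)
  simp only [← two_mul_twoCycles] at h
  have e : ∀ m : ℕ, (2 * m + 2) / 2 - 1 = m := by omega
  simp only [e] at h
  rw [← h, mul_sum]
  refine sum_congr rfl fun π _ => ?_
  rcases twoCycles π with _ | m
  · simp
  · have := Nat.add_one_mul_choose_eq m j
    have h' : ((m : ℝ) + 1) * (m.choose j) = ((m + 1).choose (j + 1)) * (j + 1) := by
      exact_mod_cast this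
    have e' : 2 * (m + 1) / 2 - 1 = m := by omega
    rw [e']
    push_cast
    linear_combination -2 * h'

/-- The binomial moments of the number of 2-cycles. -/
lemma sum_choose_twoCycles (j : ℕ) : ∀ n : ℕ, 2 * j ≤ n →
    ∑ π : Equiv.Perm (Fin n), ((twoCycles π).choose j : ℝ) =
      n.factorial / (2 ^ j * j.factorial) := by
  induction j with
  | zero =>
    intro n _
    simp [Fintype.card_perm]
  | succ j ih =>
    intro n hn
    obtain ⟨m, rfl⟩ : ∃ m, n = m + 2 := ⟨n - 2, by omega⟩
    have h := sum_choose_twoCycles_succ m j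
    rw [ih m (by omega)] at h
    have hj : (2 * ((j : ℝ) + 1)) ≠ 0 := by positivity
    apply mul_left_cancel₀ hj
    rw [h]
    have := Nat.factorial_ne_zero j
    simp only [Nat.factorial_succ]
    push_cast
    field_simp
    ring

/-- With `δ = (1 - e^{-α})/2`, one has
`h_n(α) = ∑_{j=0}^{⌊n/2⌋} (-δ)^j / j!`. -/
theorem hcoef_eq_sum (α : ENNReal) (δ : ℝ) (hδ : δ = (1 - expNegE α) / 2) (n : ℕ) :
    hcoef α n = ∑ j ∈ Finset.range (n / 2 + 1), (-δ) ^ j / (j.factorial : ℝ) := by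
  have hx : expNegE α = -2 * δ + 1 := by
    rw [hδ]
    ring
  have hpow : ∀ π : Equiv.Perm (Fin n), expNegE α ^ twoCycles π =
      ∑ j ∈ range (n / 2 + 1), (-2 * δ) ^ j * ((twoCycles π).choose j : ℝ) := by
    intro π
    rw [hx, add_pow]
    simp only [one_pow, mul_one]
    -- the added terms vanish, as `C(N, j) = 0` for `j > N`
    refine sum_subset (range_subset_range.2 (by have := twoCycles_le π; omega)) fun j _ hj => ?_
    rw [Nat.choose_eq_zero_of_lt (by simpa using hj)]
    simp
  rw [hcoef, sum_congr rfl fun π _ => hpow π, sum_comm, mul_sum]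
  refine sum_congr rfl fun j hj => ?_
  have hj' : 2 * j ≤ n := by
    have := mem_range.1 hj
    omega
  rw [← mul_sum, sum_choose_twoCycles j n hj']
  have h1 := Nat.factorial_ne_zero j
  have h2 := Nat.factorial_ne_zero n
  have h3 : (-2 * δ) ^ j = 2 ^ j * (-δ) ^ j := by
    rw [← mul_pow]
    ring
  rw [h3]
  field_simp

end
end

section
/- Let α ∈ [0,∞], δ = (1 − e^{−α})/2, and let a > 2 and m ≥ 0 be integers. Then for every n, ∑_{π ∈ S_n} N_{a,n}(π) e^{−α N_2(π)} / (h_n(α) n!) ≥ (n − a − 2m)(1 − δ^m), where N_{a,n}(π) = #{1 ≤ i ≤ n : ℓ_i(π) ≥ a} is the number of indices lying in cycles of π of length at least a. -/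
/-!
Write `w = e^{-α}` and `H n = ∑_{π ∈ S_n} w^{N₂(π)}`, so that `h n = H n / n!`.

Count pairs `(π, f)` where `f : Fin (k+1) ↪ Fin n` intertwines `j ↦ j + 1` with `π`. For a given `π`
such an `f` amounts to the choice of a point `f 0` of period `k + 1`; for a given `f` such a `π`
amounts to a permutation of the remaining `n - (k+1)` points. Hence (`sum_card_period`)
`∑_π #{i : ℓ_i(π) = k+1} w^{N₂(π)} = n! · c_k · h (n-k-1)`, where `c_1 = w` and `c_k = 1` otherwise.

Summing over all `k` gives `n h_n = ∑_{j<n} h_j - 2δ h_{n-2}` (`hcoef_rec`), whence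
`h_{2i} = h_{2i+1} = ∑_{j ≤ i} (-δ)^j / j!` (`hcoef_eq_altSum`). As `0 ≤ δ ≤ 1/2`, the alternating
series estimate yields `h_j ≥ (1 - δ^m) h_n` for `2m ≤ j ≤ n` (`hcoef_ratio`). Summing over `k + 1 ≥ a`
shows that the quantity to be bounded is `∑_{j ≤ n-a} h_j / h_n`, of which the terms with `2m ≤ j`
already suffice.
-/

open Finset

noncomputable section

/-- `N_{a,n}(π)`: the number of indices of `{1,…,n}` lying in a cycle of `π` of
length at least `a`. -/
def numLongIndices {n : ℕ} (a : ℕ) (π : Equiv.Perm (Fin n)) : ℕ :=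
  (Finset.univ.filter fun i : Fin n => a ≤ Function.minimalPeriod (⇑π) i).card

/-! ### Periods and permutations -/

section Periods

open Function

lemma minimalPeriod_of_semiconj {A B : Type*} {f : A → A} {g : B → B} {e : A → B}
    (he : Injective e) (h : ∀ x, e (f x) = g (e x)) (x : A) :
    minimalPeriod g (e x) = minimalPeriod f x := by
  have hs : Semiconj e f g := h
  rw [minimalPeriod_eq_minimalPeriod_iff]
  intro n
  have := (hs.iterate_right n) x
  unfold IsPeriodicPt IsFixedPt
  rw [← this]
  exact he.eq_iff

lemma iterate_add_one (k n : ℕ) (x : Fin (k + 1)) :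
    (fun y : Fin (k + 1) => y + 1)^[n] x = x + Fin.ofNat (k + 1) n := by
  induction n with
  | zero => simp
  | succ n ih =>
    rw [iterate_succ_apply', ih, add_assoc]
    congr 1
    ext
    simp [Fin.val_add]

lemma minimalPeriod_add_one (k : ℕ) (x : Fin (k + 1)) :
    minimalPeriod (fun y : Fin (k + 1) => y + 1) x = k + 1 := by
  have key : ∀ n, IsPeriodicPt (fun y : Fin (k + 1) => y + 1) n x ↔ k + 1 ∣ n := by
    intro n
    unfold IsPeriodicPt IsFixedPt
    rw [iterate_add_one, add_eq_left, Fin.ext_iff, Nat.dvd_iff_mod_eq_zero]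
    simp
  apply Nat.dvd_antisymm
  · exact ((key _).2 dvd_rfl).minimalPeriod_dvd
  · exact (key _).1 (isPeriodicPt_minimalPeriod _ _)

/-- The number of points of period exactly two of a permutation of a finite type. -/
def twoPts {A : Type*} [Fintype A] (π : Equiv.Perm A) : ℕ :=
  (Finset.univ.filter fun i : A => minimalPeriod (⇑π) i = 2).card

lemma twoCycles_eq {n : ℕ} (π : Equiv.Perm (Fin n)) : twoCycles π = twoPts π / 2 := rfl

lemma twoPts_permCongr {A B : Type*} [Fintype A] [Fintype B] (e : A ≃ B) (π : Equiv.Perm A) :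
    twoPts (e.permCongr π) = twoPts π := by
  unfold twoPts
  symm
  apply Finset.card_equiv e
  intro i
  simp only [mem_filter, mem_univ, true_and]
  rw [minimalPeriod_of_semiconj (f := π) (g := e.permCongr π) e.injective (by simp)]

lemma twoPts_sumCongr {A B : Type*} [Fintype A] [Fintype B] (ρ : Equiv.Perm A)
    (σ : Equiv.Perm B) : twoPts (Equiv.Perm.sumCongr ρ σ) = twoPts ρ + twoPts σ := by
  have hl : ∀ x : A, minimalPeriod (Equiv.Perm.sumCongr ρ σ) (Sum.inl x : A ⊕ B)
      = minimalPeriod ρ x :=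
    minimalPeriod_of_semiconj Sum.inl_injective (by simp)
  have hr : ∀ x : B, minimalPeriod (Equiv.Perm.sumCongr ρ σ) (Sum.inr x : A ⊕ B)
      = minimalPeriod σ x :=
    minimalPeriod_of_semiconj Sum.inr_injective (by simp)
  unfold twoPts
  simp only [Finset.card_filter, Fintype.sum_sum_type, hl, hr]

lemma twoPts_addRight (k : ℕ) :
    twoPts (Equiv.addRight (1 : Fin (k + 1))) = if k = 1 then 2 else 0 := by
  have h : ⇑(Equiv.addRight (1 : Fin (k + 1))) = fun y => y + 1 := rfl
  unfold twoPts
  simp only [h, minimalPeriod_add_one]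
  split_ifs with hk
  · subst hk; simp
  · simp [hk]

/-- For fixed `π`, an embedding of the cyclic shift into `π` amounts to a point of period `k + 1`. -/
lemma card_embeddings {n : ℕ} (k : ℕ) (π : Equiv.Perm (Fin n)) :
    (Finset.univ.filter fun f : Fin (k + 1) ↪ Fin n => ∀ j, π (f j) = f (j + 1)).card
      = (Finset.univ.filter fun i : Fin n => minimalPeriod (⇑π) i = k + 1).card := by
  apply Finset.card_bij (fun f _ => f 0)
  · intro f hf
    simp only [mem_filter, mem_univ, true_and] at hf ⊢
    rw [minimalPeriod_of_semiconj (f := fun y : Fin (k + 1) => y + 1) f.injective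
      (fun j => (hf j).symm), minimalPeriod_add_one]
  · intro f hf g hg h0
    simp only [mem_filter, mem_univ, true_and] at hf hg
    ext j
    congr 1
    induction j using Fin.induction with
    | zero => exact h0
    | succ j ih => rw [← Fin.coeSucc_eq_succ, ← hf, ← hg, ih]
  · intro i hi
    simp only [mem_filter, mem_univ, true_and] at hi
    refine ⟨⟨fun j => π^[j.val] i, ?_⟩, ?_, rfl⟩
    · intro j j' h
      apply Fin.ext
      exact iterate_injOn_Iio_minimalPeriod (f := π) (x := i)
        (by rw [hi]; exact j.isLt) (by rw [hi]; exact j'.isLt) h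
    · simp only [mem_filter, mem_univ, true_and]
      intro j
      change π (π^[j.val] i) = π^[(j + 1).val] i
      rw [← iterate_succ_apply' (⇑π), Fin.val_add]
      conv_lhs => rw [← iterate_mod_minimalPeriod_eq, hi]
      simp

end Periods

/-! ### Weighted counts by cycle length -/

/-- The unnormalised weighted count `∑_{π ∈ S_n} w^{N₂(π)}`. -/
def wsum (w : ℝ) (n : ℕ) : ℝ := ∑ π : Equiv.Perm (Fin n), w ^ twoCycles π

/-- For a fixed embedding `f` of the cyclic shift, the permutations extending it correspond to the
permutations of the complement of its range; the prescribed cycle contributes a factor `w` exactly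
when it is a 2-cycle. -/
lemma sum_fiber (w : ℝ) {n k : ℕ} (f : Fin (k + 1) ↪ Fin n) :
    ∑ π : Equiv.Perm (Fin n) with ∀ j, π (f j) = f (j + 1), w ^ twoCycles π
      = (if k = 1 then w else 1) * wsum w (n - (k + 1)) := by
  -- an identification of the complement of the range with `Fin (n - (k + 1))`
  have hcard : Fintype.card {x // x ∉ Set.range f} = n - (k + 1) := by
    rw [Fintype.card_subtype_compl, Fintype.card_fin]
    congr 1
    exact (Fintype.card_congr (Equiv.ofInjective f f.injective)).symm.trans (Fintype.card_fin _)
  let e₂ : Fin (n - (k + 1)) ≃ {x // x ∉ Set.range f} := (Fintype.equivFinOfCardEq hcard).symm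
  let e : Fin (k + 1) ⊕ Fin (n - (k + 1)) ≃ Fin n :=
    (Equiv.sumCongr (Equiv.ofInjective f f.injective) e₂).trans
      (Equiv.sumCompl (fun x => x ∈ Set.range f))
  have hel : ∀ j, e (Sum.inl j) = f j := fun j => by simp [e]
  have hesymm : ∀ j, e.symm (f j) = Sum.inl j := fun j => by rw [← hel, e.symm_apply_apply]
  let ρ : Equiv.Perm (Fin (k + 1)) := Equiv.addRight 1
  let Φ : Equiv.Perm (Fin (n - (k + 1))) → Equiv.Perm (Fin n) :=
    fun σ => e.permCongr (Equiv.Perm.sumCongr ρ σ)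
  have htc : ∀ σ, w ^ twoCycles (Φ σ) = (if k = 1 then w else 1) * w ^ twoCycles σ := by
    intro σ
    simp only [twoCycles_eq, Φ, twoPts_permCongr, twoPts_sumCongr, ρ, twoPts_addRight]
    split_ifs
    · rw [Nat.add_div_left _ (by norm_num), pow_succ, mul_comm]
    · simp
  rw [wsum, Finset.mul_sum]
  symm
  apply Finset.sum_bij (fun σ _ => Φ σ)
  · intro σ _
    simp only [mem_filter, mem_univ, true_and]
    intro j
    simp [Φ, Equiv.permCongr_apply, hesymm, hel, ρ]
  · intro σ _ τ _ h
    have h1 := e.permCongr.injective h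
    ext x
    have := congrArg (fun p => p (Sum.inr x)) h1
    simp only [Equiv.Perm.sumCongr_apply, Sum.map_inr] at this
    rw [Sum.inr_injective this]
  · intro π hπ
    simp only [mem_filter, mem_univ, true_and] at hπ
    let π' := e.symm.permCongr π
    have hπ' : ∀ j, π' (Sum.inl j) = Sum.inl (j + 1) := by
      intro j
      simp [π', Equiv.permCongr_apply, hel, hπ, hesymm]
    have hm : Set.MapsTo π' (Set.range Sum.inl) (Set.range Sum.inl) := by
      rintro _ ⟨j, rfl⟩
      exact ⟨j + 1, (hπ' j).symm⟩
    obtain ⟨⟨ρ', σ⟩, hσ⟩ := Equiv.Perm.mem_sumCongrHom_range_of_perm_mapsTo_inl hm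
    rw [Equiv.Perm.sumCongrHom_apply] at hσ
    have hρ : ρ' = ρ := by
      ext j
      have := hπ' j
      rw [← hσ] at this
      simp at this
      simp [this, ρ]
    refine ⟨σ, mem_univ _, ?_⟩
    simp only at hσ
    simp only [Φ, ← hρ, hσ, π']
    ext x
    simp [Equiv.permCongr_apply]
  · intro σ _
    exact (htc σ).symm

/-- Weighted count of points in cycles of length `k + 1`, by double counting pairs `(π, f)`. -/
lemma sum_card_period_wsum (w : ℝ) (n k : ℕ) :
    ∑ π : Equiv.Perm (Fin n),
      ((Finset.univ.filter fun i : Fin n => Function.minimalPeriod (⇑π) i = k + 1).card : ℝ)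
        * w ^ twoCycles π
      = n.descFactorial (k + 1) * ((if k = 1 then w else 1) * wsum w (n - (k + 1))) := by
  have h1 : ∀ π : Equiv.Perm (Fin n),
      ((Finset.univ.filter fun i : Fin n => Function.minimalPeriod (⇑π) i = k + 1).card : ℝ)
        * w ^ twoCycles π
      = ∑ f : Fin (k + 1) ↪ Fin n, if ∀ j, π (f j) = f (j + 1) then w ^ twoCycles π else 0 := by
    intro π
    rw [← card_embeddings, ← Finset.sum_filter, Finset.sum_const, nsmul_eq_mul]
  simp_rw [h1]
  rw [Finset.sum_comm]
  simp_rw [← Finset.sum_filter, sum_fiber]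
  rw [Finset.sum_const, nsmul_eq_mul, Finset.card_univ, Fintype.card_embedding_eq]
  simp

/-- The normalised form of `sum_card_period_wsum`. -/
lemma sum_card_period (α : ENNReal) {n k : ℕ} (hk : k < n) :
    ∑ π : Equiv.Perm (Fin n),
      ((Finset.univ.filter fun i : Fin n => Function.minimalPeriod (⇑π) i = k + 1).card : ℝ)
        * expNegE α ^ twoCycles π
      = n.factorial * ((if k = 1 then expNegE α else 1) * hcoef α (n - 1 - k)) := by
  rw [sum_card_period_wsum, hcoef, ← wsum, show n - 1 - k = n - (k + 1) by omega,
    ← Nat.factorial_mul_descFactorial (show k + 1 ≤ n from hk)]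
  have : ((n - (k + 1)).factorial : ℝ) ≠ 0 := by positivity
  push_cast
  field_simp

/-- Points sorted by the length of their cycle; lengths lie between `1` and `n`. -/
lemma card_filter_period {n : ℕ} (π : Equiv.Perm (Fin n)) (P : ℕ → Prop) [DecidablePred P] :
    (Finset.univ.filter fun i : Fin n => P (Function.minimalPeriod (⇑π) i)).card
      = ∑ k ∈ Finset.range n with P (k + 1),
        (Finset.univ.filter fun i : Fin n => Function.minimalPeriod (⇑π) i = k + 1).card := by
  have hpos : ∀ i, 0 < Function.minimalPeriod (⇑π) i := fun i =>
    Function.minimalPeriod_pos_of_mem_periodicPts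
      (Function.Injective.mem_periodicPts π.injective i)
  have hle : ∀ i, Function.minimalPeriod (⇑π) i ≤ n := fun i => by
    simpa using Function.minimalPeriod_le_card (f := ⇑π) (x := i)
  rw [Finset.card_eq_sum_card_fiberwise
    (f := fun i => Function.minimalPeriod (⇑π) i - 1) (t := (Finset.range n).filter (P <| · + 1))]
  · apply Finset.sum_congr rfl
    intro k hk
    congr 1
    ext i
    have := hpos i
    simp only [mem_filter, mem_univ, true_and, mem_range] at hk ⊢
    constructor
    · rintro ⟨_, h⟩; omega
    · intro h; rw [h]; exact ⟨hk.2, rfl⟩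
  · intro i hi
    have h1 := hpos i
    have h2 := hle i
    simp only [coe_filter, mem_univ, true_and, Set.mem_ofPred_eq, mem_range] at hi ⊢
    rw [Nat.sub_add_cancel h1]
    exact ⟨by omega, hi⟩

lemma sum_filter_period (α : ENNReal) (n : ℕ) (P : ℕ → Prop) [DecidablePred P] :
    ∑ π : Equiv.Perm (Fin n),
      ((Finset.univ.filter fun i : Fin n => P (Function.minimalPeriod (⇑π) i)).card : ℝ)
        * expNegE α ^ twoCycles π
      = n.factorial * ∑ k ∈ Finset.range n with P (k + 1),
          (if k = 1 then expNegE α else 1) * hcoef α (n - 1 - k) := by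
  simp_rw [card_filter_period _ P]
  push_cast
  simp_rw [Finset.sum_mul]
  rw [Finset.sum_comm, Finset.mul_sum]
  apply Finset.sum_congr rfl
  intro k hk
  exact sum_card_period α (by simpa using (mem_filter.1 hk).1)

/-! ### The coefficients as alternating partial sums -/

lemma hcoef_conv (α : ENNReal) (n : ℕ) :
    n * hcoef α n
      = ∑ k ∈ Finset.range n, (if k = 1 then expNegE α else 1) * hcoef α (n - 1 - k) := by
  have h := sum_filter_period α n (fun _ => True)
  simp only [filter_true, card_univ, Fintype.card_fin, ← Finset.mul_sum] at h
  have hf : (n.factorial : ℝ) ≠ 0 := by positivity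
  rw [hcoef, mul_comm (1 / (n.factorial : ℝ)), ← mul_assoc, h]
  field_simp

lemma hcoef_zero (α : ENNReal) : hcoef α 0 = 1 := by
  simp [hcoef, twoCycles]

lemma hcoef_one (α : ENNReal) : hcoef α 1 = 1 := by
  have := hcoef_conv α 1
  simpa [hcoef_zero] using this

lemma hcoef_rec (α : ENNReal) (n : ℕ) :
    ((n : ℝ) + 2) * hcoef α (n + 2)
      = ∑ j ∈ Finset.range (n + 2), hcoef α j - (1 - expNegE α) * hcoef α n := by
  have h := hcoef_conv α (n + 2)
  have h2 : ∀ k, (if k = 1 then expNegE α else 1) * hcoef α (n + 2 - 1 - k)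
      = hcoef α (n + 2 - 1 - k) - if k = 1 then (1 - expNegE α) * hcoef α n else 0 := by
    intro k
    split_ifs with hk
    · subst hk
      simp only [show n + 2 - 1 - 1 = n by omega]
      ring
    · ring
  simp_rw [h2] at h
  rw [Finset.sum_sub_distrib, Finset.sum_range_reflect (fun j => hcoef α j)] at h
  simpa using h

lemma hcoef_diff (α : ENNReal) (n : ℕ) :
    ((n : ℝ) + 3) * (hcoef α (n + 3) - hcoef α (n + 2))
      = -(1 - expNegE α) * (hcoef α (n + 1) - hcoef α n) := by
  have h1 := hcoef_rec α n
  have h2 := hcoef_rec α (n + 1)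
  rw [show n + 1 + 2 = n + 2 + 1 by ring, Finset.sum_range_succ] at h2
  push_cast at h2
  linarith

/-- The partial sums of the exponential series at `-δ`. -/
def altSum (δ : ℝ) (i : ℕ) : ℝ := ∑ j ∈ Finset.range (i + 1), (-δ) ^ j / (j.factorial : ℝ)

lemma altSum_succ (δ : ℝ) (i : ℕ) :
    altSum δ (i + 1) = altSum δ i + (-δ) ^ (i + 1) / ((i + 1).factorial : ℝ) :=
  Finset.sum_range_succ _ _

lemma hcoef_eq_aux (α : ENNReal) (δ : ℝ) (hδ : δ = (1 - expNegE α) / 2) (i : ℕ) :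
    hcoef α (2 * i) = altSum δ i ∧ hcoef α (2 * i + 1) = altSum δ i ∧
      hcoef α (2 * i + 2) = altSum δ (i + 1) := by
  have hw : 1 - expNegE α = 2 * δ := by rw [hδ]; ring
  induction i with
  | zero =>
    have h := hcoef_rec α 0
    simp only [Finset.sum_range_succ, Finset.sum_range_zero, hcoef_zero, hcoef_one, hw] at h
    refine ⟨by simp [altSum, hcoef_zero], by simp [altSum, hcoef_one], ?_⟩
    simp only [altSum, Finset.sum_range_succ, Finset.sum_range_zero]
    norm_num at h ⊢
    linarith
  | succ i ih =>
    obtain ⟨h0, h1, h2⟩ := ih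
    have h3 : hcoef α (2 * i + 3) = altSum δ (i + 1) := by
      have h := hcoef_diff α (2 * i)
      rw [h0, h1, h2, sub_self, mul_zero] at h
      have hne : ((2 * i : ℕ) : ℝ) + 3 ≠ 0 := by positivity
      have := (mul_eq_zero.1 h).resolve_left hne
      linarith
    refine ⟨h2, h3, ?_⟩
    have h := hcoef_diff α (2 * i + 1)
    rw [show 2 * i + 1 + 3 = 2 * (i + 1) + 2 by ring, show 2 * i + 1 + 2 = 2 * i + 3 by ring,
      show 2 * i + 1 + 1 = 2 * i + 2 by ring, h1, h2, h3, hw, altSum_succ δ i] at h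
    rw [altSum_succ δ (i + 1), altSum_succ δ i, Nat.factorial_succ (i + 1), pow_succ (-δ) (i + 1)]
    generalize (-δ) ^ (i + 1) = p at h ⊢
    have hne : ((i + 1).factorial : ℝ) ≠ 0 := by positivity
    have hne2 : (i : ℝ) + 2 ≠ 0 := by positivity
    push_cast at h ⊢
    rw [show (i : ℝ) + 1 + 1 = i + 2 by ring]
    field_simp at h ⊢
    linarith

lemma hcoef_eq_altSum (α : ENNReal) (δ : ℝ) (hδ : δ = (1 - expNegE α) / 2) (n : ℕ) :
    hcoef α n = altSum δ (n / 2) := by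
  obtain ⟨h0, h1, -⟩ := hcoef_eq_aux α δ hδ (n / 2)
  rcases Nat.mod_two_eq_zero_or_one n with h | h
  · rw [← h0]; congr 1; omega
  · rw [← h1]; congr 1; omega

/-- The alternating series estimate: a tail is a fraction of its first term. -/
lemma altSum_tail (δ : ℝ) (h0 : 0 ≤ δ) (h1 : δ ≤ 1) (r : ℕ) : ∀ i : ℕ, ∃ t : ℝ, 0 ≤ t ∧ t ≤ 1 ∧
    altSum δ (i + r) = altSum δ i + (-δ) ^ (i + 1) / ((i + 1).factorial : ℝ) * t := by
  induction r with
  | zero => exact fun i => ⟨0, le_rfl, zero_le_one, by simp⟩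
  | succ r ih =>
    intro i
    obtain ⟨t, ht0, ht1, ht⟩ := ih (i + 1)
    have hi : (0 : ℝ) < i + 2 := by positivity
    have hq1 : δ / (i + 2) ≤ 1 := by
      rw [div_le_one hi]
      have : (0 : ℝ) ≤ i := by positivity
      linarith
    have hq0 : 0 ≤ δ / (i + 2) := by positivity
    refine ⟨1 - δ / (i + 2) * t, ?_, ?_, ?_⟩
    · linarith [mul_le_one₀ hq1 ht0 ht1]
    · linarith [mul_nonneg hq0 ht0]
    · rw [show i + (r + 1) = i + 1 + r by ring, ht, altSum_succ, Nat.factorial_succ (i + 1),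
        pow_succ]
      have hne : ((i + 1).factorial : ℝ) ≠ 0 := by positivity
      push_cast
      rw [show (i : ℝ) + 1 + 1 = i + 2 by ring]
      field_simp
      ring

lemma altSum_ge_half (δ : ℝ) (h0 : 0 ≤ δ) (h1 : δ ≤ 1 / 2) (i : ℕ) : 1 / 2 ≤ altSum δ i := by
  obtain ⟨t, ht0, ht1, ht⟩ := altSum_tail δ h0 (by linarith) i 0
  rw [zero_add] at ht
  rw [ht]
  have : altSum δ 0 = 1 := by simp [altSum]
  rw [this]
  norm_num
  nlinarith

lemma altSum_ratio (δ : ℝ) (h0 : 0 ≤ δ) (h1 : δ ≤ 1 / 2) {m i k : ℕ} (hmi : m ≤ i) (hik : i ≤ k) :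
    (1 - δ ^ m) * altSum δ k ≤ altSum δ i := by
  obtain ⟨r, rfl⟩ := Nat.exists_eq_add_of_le hik
  obtain ⟨t, ht0, ht1, ht⟩ := altSum_tail δ h0 (by linarith) r i
  have hk := altSum_ge_half δ h0 h1 (i + r)
  have hδm : 0 ≤ δ ^ m := by positivity
  have hfac : (1 : ℝ) ≤ ((i + 1).factorial : ℝ) := by exact_mod_cast Nat.factorial_pos _
  have habs : |(-δ) ^ (i + 1) / ((i + 1).factorial : ℝ) * t| ≤ δ ^ (i + 1) := by
    rw [abs_mul, abs_div, abs_pow, abs_neg, abs_of_nonneg h0, abs_of_nonneg ht0,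
      abs_of_nonneg (by linarith : (0 : ℝ) ≤ ((i + 1).factorial : ℝ))]
    have h2 : δ ^ (i + 1) / ((i + 1).factorial : ℝ) ≤ δ ^ (i + 1) :=
      div_le_self (by positivity) hfac
    calc _ ≤ δ ^ (i + 1) / ((i + 1).factorial : ℝ) * 1 := by gcongr
      _ ≤ _ := by linarith
  have hpow : δ ^ (i + 1) ≤ δ ^ m * (1 / 2) := by
    rw [pow_succ]
    gcongr ?_ * ?_
    exact pow_le_pow_of_le_one h0 (by linarith) hmi
  have hmul : δ ^ m * (1 / 2) ≤ δ ^ m * altSum δ (i + r) := by gcongr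
  have := (abs_le.1 habs).2
  linarith

lemma delta_bounds (α : ENNReal) (δ : ℝ) (hδ : δ = (1 - expNegE α) / 2) :
    0 ≤ δ ∧ δ ≤ 1 / 2 := by
  have h : 0 ≤ expNegE α ∧ expNegE α ≤ 1 := by
    unfold expNegE
    split_ifs
    · simp
    · exact ⟨(Real.exp_pos _).le, by simp⟩
  constructor <;> linarith [h.1, h.2]

lemma hcoef_pos (α : ENNReal) (n : ℕ) : 0 < hcoef α n := by
  obtain ⟨h0, h1⟩ := delta_bounds α _ rfl
  rw [hcoef_eq_altSum α _ rfl]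
  linarith [altSum_ge_half _ h0 h1 (n / 2)]

lemma hcoef_ratio (α : ENNReal) (δ : ℝ) (hδ : δ = (1 - expNegE α) / 2) {m j n : ℕ}
    (hj : 2 * m ≤ j) (hjn : j ≤ n) : 1 - δ ^ m ≤ hcoef α j / hcoef α n := by
  obtain ⟨h0, h1⟩ := delta_bounds α δ hδ
  rw [le_div_iff₀ (hcoef_pos α n), hcoef_eq_altSum α δ hδ, hcoef_eq_altSum α δ hδ]
  exact altSum_ratio δ h0 h1 (by omega) (by omega)

/-! ### The weighted number of indices in long cycles -/

/-- The weighted mean of `N_{a,n}` is `∑_{j ≤ n - a} h_j / h_n`; since `a > 2`, no 2-cycle weight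
appears. -/
lemma mean_numLongIndices (α : ENNReal) (a n : ℕ) (ha : 2 < a) :
    ∑ π : Equiv.Perm (Fin n),
        (numLongIndices a π : ℝ) * expNegE α ^ twoCycles π / (hcoef α n * (n.factorial : ℝ))
      = ∑ j ∈ Finset.range (n + 1 - a), hcoef α j / hcoef α n := by
  have h := sum_filter_period α n (fun l => a ≤ l)
  have hf : (n.factorial : ℝ) ≠ 0 := by positivity
  have hh := (hcoef_pos α n).ne'
  have hs : ∑ k ∈ Finset.range n with a ≤ k + 1,
      (if k = 1 then expNegE α else 1) * hcoef α (n - 1 - k)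
      = ∑ j ∈ Finset.range (n + 1 - a), hcoef α j := by
    refine Finset.sum_bij' (fun k _ => n - 1 - k) (fun j _ => n - 1 - j) ?_ ?_ ?_ ?_ ?_
    · intro k hk; simp only [mem_filter, mem_range] at hk ⊢; omega
    · intro k hk; simp only [mem_filter, mem_range] at hk ⊢; omega
    · intro k hk; simp only [mem_filter, mem_range] at hk; omega
    · intro k hk; simp only [mem_range] at hk; omega
    · intro k hk
      simp only [mem_filter, mem_range] at hk
      rw [if_neg (by omega), one_mul]
  rw [← Finset.sum_div, ← Finset.sum_div]
  unfold numLongIndices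
  rw [h, hs]
  field_simp


/-- For integers `a > 2` and `m ≥ 0`, with `δ = (1 - e^{-α})/2`,
`∑_{π ∈ S_n} N_{a,n}(π) e^{-α N₂(π)} / (h_n(α) n!) ≥ (n - a - 2m)(1 - δ^m)`. -/
theorem sum_numLongIndices_ge (α : ENNReal) (δ : ℝ) (hδ : δ = (1 - expNegE α) / 2)
    (a m : ℕ) (ha : 2 < a) (n : ℕ) :
    ((n : ℝ) - a - 2 * m) * (1 - δ ^ m) ≤
      ∑ π : Equiv.Perm (Fin n),
        (numLongIndices a π : ℝ) * expNegE α ^ twoCycles π / (hcoef α n * (n.factorial : ℝ)) := by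
  rw [mean_numLongIndices α a n ha]
  obtain ⟨h0, h1⟩ := delta_bounds α δ hδ
  have hpow : δ ^ m ≤ 1 := pow_le_one₀ h0 (by linarith)
  have hterm : ∀ j, 0 ≤ hcoef α j / hcoef α n := fun j =>
    div_nonneg (hcoef_pos α j).le (hcoef_pos α n).le
  calc ((n : ℝ) - a - 2 * m) * (1 - δ ^ m)
      ≤ ((Finset.Ico (2 * m) (n + 1 - a)).card : ℝ) * (1 - δ ^ m) := by
        apply mul_le_mul_of_nonneg_right _ (by linarith)
        rw [Nat.card_Ico]
        have : n ≤ n + 1 - a - 2 * m + a + 2 * m := by omega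
        have : (n : ℝ) ≤ ((n + 1 - a - 2 * m : ℕ) : ℝ) + a + 2 * m := by exact_mod_cast this
        linarith
    _ ≤ ∑ j ∈ Finset.Ico (2 * m) (n + 1 - a), hcoef α j / hcoef α n := by
        rw [← nsmul_eq_mul]
        apply Finset.card_nsmul_le_sum
        intro j hj
        rw [Finset.mem_Ico] at hj
        exact hcoef_ratio α δ hδ hj.1 (by omega)
    _ ≤ ∑ j ∈ Finset.range (n + 1 - a), hcoef α j / hcoef α n := by
        apply Finset.sum_le_sum_of_subset_of_nonneg
        · intro j hj
          simp only [Finset.mem_Ico, Finset.mem_range] at hj ⊢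
          exact hj.2
        · exact fun j _ _ => hterm j

end
end

section
/- Let d ≥ 1 and let g : (0,∞) → (0,∞) be such that ∫_0^∞ r^{d−1} g(r) dr < ∞ and the function r ↦ r^{d−1} g(r) is convex on (0,∞). Then the radial function f(x) = g(|x|) on ℝ^d has nonnegative Fourier transform: f̂(k) = ∫_{ℝ^d} e^{−2πi k·x} g(|x|) dx ≥ 0 for every k ∈ ℝ^d. -/
open MeasureTheory Real
open scoped RealInnerProductSpace

/-!
In polar coordinates `x = r ω` the real part of the Fourier integral is
`∫_{S^{d-1}} ∫_0^∞ r^(d-1) g(r) cos(2π r ⟪k, ω⟫) dr dω`, so it suffices to show that the inner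
integral `∫_0^∞ h(r) cos(a r) dr` is nonnegative for every real `a` when `h = r^(d-1) g` is
nonnegative, integrable and convex on `(0, ∞)` (`integral_mul_cos_nonneg`).

For `a > 0`, split `(0, ∞)` into periods `[c, c + T]` of `cos (a r)`, `T = 2π/a`. Let `ℓ` be the
affine function interpolating `h` at the two zeros `c + T/4`, `c + 3T/4` of the cosine. By convexity
`h - ℓ` is nonpositive between these zeros and nonnegative outside them, exactly like the cosine, so
`(h - ℓ) cos (a r) ≥ 0` (`chord_mul_cos_nonneg`); and an affine function is orthogonal to
`cos (a r)` over a full period (`integral_affine_mul_cos`). Hence each period contributes a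
nonnegative amount.

The imaginary part vanishes because the integrand at `-x` is the conjugate of the integrand at `x`.
-/

/-- A convex function is below its chord between the interpolation points `p < q` and above it
outside; both facts are encoded by the sign of `(x - p) * (x - q)`. -/
lemma chord_sign {h : ℝ → ℝ} (hc : ConvexOn ℝ (Set.Ioi 0) h) {p q x : ℝ}
    (hp : 0 < p) (hpq : p < q) (hx : 0 < x) :
    ((x - p) * (x - q) ≤ 0 → h x ≤ h p + (h q - h p) / (q - p) * (x - p)) ∧
    (0 ≤ (x - p) * (x - q) → h p + (h q - h p) / (q - p) * (x - p) ≤ h x) := by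
  have hq : 0 < q := hp.trans hpq
  have hpq' : 0 < q - p := sub_pos.2 hpq
  obtain ⟨m, hm⟩ : ∃ m, m = (h q - h p) / (q - p) := ⟨_, rfl⟩
  have hm' : h q = h p + m * (q - p) := by rw [hm]; field_simp; ring
  rw [← hm]
  rcases lt_trichotomy x p with hxp | rfl | hxp
  · have key := hc.slope_mono_adjacent (Set.mem_Ioi.2 hx) (Set.mem_Ioi.2 hq) hxp hpq
    rw [← hm, div_le_iff₀ (by linarith)] at key
    exact ⟨fun hs => by nlinarith, fun _ => by linarith⟩
  · simp
  rcases lt_trichotomy x q with hxq | rfl | hxq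
  · have key := hc.slope_mono_adjacent (Set.mem_Ioi.2 hp) (Set.mem_Ioi.2 hq) hxp hxq
    rw [div_le_div_iff₀ (by linarith) (by linarith), hm'] at key
    refine ⟨fun _ => ?_, fun hs => by nlinarith⟩
    have : (h x - (h p + m * (x - p))) * (q - p) ≤ 0 := by nlinarith
    nlinarith
  · rw [hm']; simp
  · have key := hc.slope_mono_adjacent (Set.mem_Ioi.2 hp) (Set.mem_Ioi.2 hx) hpq hxq
    rw [← hm, le_div_iff₀ (by linarith)] at key
    exact ⟨fun hs => by nlinarith, fun _ => by linarith⟩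

/-- On a full period of `cos (a x)`, the deviation of `h` from its chord through the two zeros of
the cosine has the same sign as the cosine. -/
lemma chord_mul_cos_nonneg {h : ℝ → ℝ} (hc : ConvexOn ℝ (Set.Ioi 0) h) {a : ℝ} (ha : 0 < a)
    (n : ℕ) {p q x : ℝ} (hp : a * p = n * (2 * π) + π / 2) (hq : a * q = n * (2 * π) + 3 * π / 2)
    (h1 : n * (2 * π) < a * x) (h2 : a * x < (n + 1) * (2 * π)) :
    0 ≤ (h x - (h p + (h q - h p) / (q - p) * (x - p))) * cos (a * x) := by
  have hπ := Real.pi_pos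
  have hn : (0 : ℝ) ≤ n * (2 * π) := by positivity
  have hp0 : 0 < p := pos_of_mul_pos_right (by linarith : 0 < a * p) ha.le
  have hx0 : 0 < x := pos_of_mul_pos_right (by linarith : 0 < a * x) ha.le
  have hpq : p < q := lt_of_mul_lt_mul_left (by linarith : a * p < a * q) ha.le
  obtain ⟨hin, hout⟩ := chord_sign hc hp0 hpq hx0
  have hcos : cos (a * x) = cos (a * x - n * (2 * π)) := (cos_sub_nat_mul_two_pi _ _).symm
  rcases le_total x p with hxp | hxp
  · have := hout (mul_nonneg_of_nonpos_of_nonpos (by linarith) (by linarith))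
    refine mul_nonneg (by linarith) ?_
    rw [hcos]
    have := mul_le_mul_of_nonneg_left hxp ha.le
    exact cos_nonneg_of_neg_pi_div_two_le_of_le (by linarith) (by linarith)
  rcases le_total x q with hxq | hxq
  · have := hin (mul_nonpos_of_nonneg_of_nonpos (by linarith) (by linarith))
    refine mul_nonneg_of_nonpos_of_nonpos (by linarith) ?_
    rw [hcos]
    have := mul_le_mul_of_nonneg_left hxp ha.le
    have := mul_le_mul_of_nonneg_left hxq ha.le
    exact cos_nonpos_of_pi_div_two_le_of_le (by linarith) (by linarith)
  · have := hout (mul_nonneg (by linarith) (by linarith))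
    refine mul_nonneg (by linarith) ?_
    rw [hcos, ← cos_sub_two_pi]
    have := mul_le_mul_of_nonneg_left hxq ha.le
    exact cos_nonneg_of_neg_pi_div_two_le_of_le (by linarith) (by linarith)

lemma integral_affine_mul_cos {a : ℝ} (ha : 0 < a) (n : ℕ) {s t : ℝ} (hs : a * s = n * (2 * π))
    (ht : a * t = (n + 1 : ℕ) * (2 * π)) (A m p : ℝ) :
    ∫ x in s..t, (A + m * (x - p)) * cos (a * x) = 0 := by
  have hd : ∀ x ∈ Set.uIcc s t, HasDerivAt
      (fun x => (A + m * (x - p)) * (sin (a * x) / a) + m * (cos (a * x) / a ^ 2))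
      ((A + m * (x - p)) * cos (a * x)) x := by
    intro x _
    have h0 : HasDerivAt (fun x : ℝ => a * x) a x := by
      simpa using (hasDerivAt_id x).const_mul a
    have h1 : HasDerivAt (fun x : ℝ => A + m * (x - p)) m x := by
      simpa using (((hasDerivAt_id x).sub_const p).const_mul m).const_add A
    refine HasDerivAt.congr_deriv
      ((h1.mul (h0.sin.div_const a)).add ((h0.cos.div_const (a ^ 2)).const_mul m)) ?_
    field_simp
    ring
  rw [intervalIntegral.integral_eq_sub_of_hasDerivAt hd
    (Continuous.intervalIntegrable (by fun_prop) _ _)]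
  have e1 (n : ℕ) : sin (n * (2 * π)) = 0 := by
    simpa using sin_add_nat_mul_two_pi 0 n
  simp only [hs, ht, e1, cos_nat_mul_two_pi]
  ring

lemma integral_mul_cos_nonneg_of_pos {h : ℝ → ℝ} (hi : IntegrableOn h (Set.Ioi 0))
    (hc : ConvexOn ℝ (Set.Ioi 0) h) {a : ℝ} (ha : 0 < a) :
    0 ≤ ∫ x in Set.Ioi 0, h x * cos (a * x) := by
  have hπ := Real.pi_pos
  have hi' : IntegrableOn (fun x => h x * cos (a * x)) (Set.Ioi 0) := by
    refine Integrable.mul_bdd (c := 1) hi (by fun_prop) ?_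
    exact Filter.Eventually.of_forall fun x => by simpa using abs_cos_le_one (a * x)
  let c : ℕ → ℝ := fun n => n * (2 * π) / a
  have hac (n : ℕ) : a * c n = n * (2 * π) := by simp only [c]; field_simp
  have hc0 (n : ℕ) : 0 ≤ c n := by positivity
  have hcm (n : ℕ) : c n ≤ c (n + 1) := by
    simp only [c]; gcongr; simp
  have hint (n : ℕ) : IntervalIntegrable (fun x => h x * cos (a * x)) volume (c n) (c (n + 1)) := by
    rw [intervalIntegrable_iff_integrableOn_Ioc_of_le (hcm n)]
    exact hi'.mono_set fun x hx => (hc0 n).trans_lt hx.1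
  have hlim : Filter.Tendsto c Filter.atTop Filter.atTop := by
    have : c = fun n : ℕ => (n : ℝ) * (2 * π / a) := by ext n; simp only [c]; ring
    rw [this]
    exact tendsto_natCast_atTop_atTop.atTop_mul_const (by positivity)
  refine ge_of_tendsto' (intervalIntegral_tendsto_integral_Ioi 0 hi' hlim) fun N => ?_
  have h0 : c 0 = 0 := by simp [c]
  have hsum := intervalIntegral.sum_integral_adjacent_intervals (n := N) fun k _ => hint k
  rw [h0] at hsum
  rw [← hsum]
  refine Finset.sum_nonneg fun n _ => ?_
  let p := (n * (2 * π) + π / 2) / a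
  let q := (n * (2 * π) + 3 * π / 2) / a
  rw [← integral_affine_mul_cos ha n (hac n) (hac (n + 1)) (h p) ((h q - h p) / (q - p)) p]
  refine intervalIntegral.integral_mono_on_of_le_Ioo (hcm n)
    (Continuous.intervalIntegrable (by fun_prop) _ _) (hint n) fun x hx => ?_
  have h1 := mul_lt_mul_of_pos_left hx.1 ha
  have h2 := mul_lt_mul_of_pos_left hx.2 ha
  rw [hac] at h1 h2
  push_cast at h2
  have := chord_mul_cos_nonneg hc ha n (p := p) (q := q) (by simp only [p]; field_simp)
    (by simp only [q]; field_simp) h1 h2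
  linarith

lemma integral_mul_cos_nonneg {h : ℝ → ℝ} (hi : IntegrableOn h (Set.Ioi 0))
    (hc : ConvexOn ℝ (Set.Ioi 0) h) (hpos : ∀ r ∈ Set.Ioi (0 : ℝ), 0 ≤ h r) (a : ℝ) :
    0 ≤ ∫ x in Set.Ioi 0, h x * cos (a * x) := by
  rcases lt_trichotomy a 0 with ha | rfl | ha
  · simpa using integral_mul_cos_nonneg_of_pos hi hc (neg_pos.2 ha)
  · simpa using setIntegral_nonneg measurableSet_Ioi hpos
  · exact integral_mul_cos_nonneg_of_pos hi hc ha

/-- An integral over `E` is nonnegative as soon as all its radial integrals are. No integrability of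
`F` is needed, since the Bochner integral of a non-integrable function is `0`. -/
lemma integral_nonneg_of_radial {E : Type*} [NormedAddCommGroup E] [NormedSpace ℝ E]
    [MeasurableSpace E] [BorelSpace E] [FiniteDimensional ℝ E] [Nontrivial E]
    (μ : Measure E) [μ.IsAddHaarMeasure] (F : E → ℝ)
    (hF : ∀ ω : E, ‖ω‖ = 1 →
      0 ≤ ∫ r in Set.Ioi (0 : ℝ), r ^ (Module.finrank ℝ E - 1) * F (r • ω)) :
    0 ≤ ∫ x, F x ∂μ := by
  have e1 : ∫ x, F x ∂μ = ∫ x : ({(0)}ᶜ : Set E), F x.1 ∂(μ.comap (↑)) := by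
    rw [integral_subtype_comap (measurableSet_singleton _).compl F, restrict_compl_singleton]
  have e2 : ∫ x : ({(0)}ᶜ : Set E), F x.1 ∂(μ.comap (↑))
      = ∫ z, F (z.2.1 • z.1.1) ∂μ.toSphere.prod (.volumeIoiPow (Module.finrank ℝ E - 1)) := by
    rw [← μ.measurePreserving_homeomorphUnitSphereProd.integral_comp
      (Homeomorph.measurableEmbedding _)]
    refine integral_congr_ae (Filter.Eventually.of_forall fun x => ?_)
    have hx : ‖x.1‖ ≠ 0 := norm_ne_zero_iff.2 x.2
    simp [smul_smul, hx]
  rw [e1, e2]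
  by_cases hint : Integrable (fun z : Metric.sphere (0 : E) 1 × Set.Ioi (0 : ℝ) =>
      F (z.2.1 • z.1.1)) (μ.toSphere.prod (.volumeIoiPow (Module.finrank ℝ E - 1)))
  swap
  · rw [integral_undef hint]
  rw [integral_prod _ hint]
  refine integral_nonneg fun ω => ?_
  refine (hF ω.1 (by simp)).trans_eq ?_
  simp only [Measure.volumeIoiPow, ENNReal.ofReal]
  rw [integral_withDensity_eq_integral_smul,
    integral_subtype_comap measurableSet_Ioi
      fun r => Real.toNNReal (r ^ (Module.finrank ℝ E - 1)) • F (r • ω.1)]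
  · refine setIntegral_congr_fun measurableSet_Ioi fun r hr => ?_
    simp only [NNReal.smul_def, smul_eq_mul]
    rw [Real.coe_toNNReal _ (pow_nonneg (le_of_lt hr) _)]
  · exact (measurable_subtype_coe.pow_const _).real_toNNReal

/-- If `g : (0,∞) → (0,∞)` is such that `r^(d-1) g r` is
integrable on `(0,∞)` and convex, then the radial function `x ↦ g |x|` on `ℝ^d`
has nonnegative (real) Fourier transform. -/
theorem fourier_nonneg_of_convex
    (d : ℕ) (hd : 1 ≤ d) (g : ℝ → ℝ)
    (hgpos : ∀ r ∈ Set.Ioi (0 : ℝ), 0 < g r)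
    (hgint : MeasureTheory.IntegrableOn (fun r : ℝ => r ^ (d - 1) * g r) (Set.Ioi 0))
    (hgconv : ConvexOn ℝ (Set.Ioi 0) (fun r : ℝ => r ^ (d - 1) * g r)) :
    ∀ k : EuclideanSpace ℝ (Fin d),
      0 ≤ (∫ x : EuclideanSpace ℝ (Fin d),
            Complex.exp ((((-2) * Real.pi * ⟪k, x⟫ : ℝ) : ℂ) * Complex.I) * (g ‖x‖ : ℂ)).re ∧
      (∫ x : EuclideanSpace ℝ (Fin d),
            Complex.exp ((((-2) * Real.pi * ⟪k, x⟫ : ℝ) : ℂ) * Complex.I) * (g ‖x‖ : ℂ)).im = 0 := by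
  intro k
  constructor
  · by_cases hint : Integrable (fun x : EuclideanSpace ℝ (Fin d) =>
        Complex.exp ((((-2) * Real.pi * ⟪k, x⟫ : ℝ) : ℂ) * Complex.I) * (g ‖x‖ : ℂ))
    swap
    · rw [integral_undef hint]; simp
    have hre := integral_re hint
    simp only [RCLike.re_eq_complex_re] at hre
    rw [← hre]
    have : Nonempty (Fin d) := ⟨⟨0, hd⟩⟩
    refine integral_nonneg_of_radial _ _ fun ω hω => ?_
    have hpos : ∀ r ∈ Set.Ioi (0 : ℝ), 0 ≤ r ^ (d - 1) * g r := fun r hr =>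
      mul_nonneg (pow_nonneg (le_of_lt hr) _) (hgpos r hr).le
    refine (integral_mul_cos_nonneg hgint hgconv hpos ((-2) * π * ⟪k, ω⟫)).trans_eq ?_
    refine setIntegral_congr_fun measurableSet_Ioi fun r hr => ?_
    have hnorm : ‖r • ω‖ = r := by
      rw [norm_smul, hω, mul_one, Real.norm_of_nonneg (le_of_lt hr)]
    simp only [hnorm, Complex.re_mul_ofReal, Complex.exp_ofReal_mul_I_re, inner_smul_right,
      finrank_euclideanSpace, Fintype.card_fin]
    rw [show (-2) * π * ⟪k, ω⟫ * r = (-2) * π * (r * ⟪k, ω⟫) by ring]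
    ring
  · rw [← Complex.conj_eq_iff_im, ← integral_conj]
    rw [← integral_neg_eq_self]
    refine integral_congr_ae (Filter.Eventually.of_forall fun x => ?_)
    simp [← Complex.exp_conj, Complex.conj_ofNat]
end
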